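/- arXiv:1903.06195 — 7 statements merged into one kernel-verified Lean document; each statement's English description precedes it below -/
import Mathlib

section
/- For every LIKE pattern p over an alphabet Σ there exists a LIKE pattern p' over Σ that is normalized (i.e., p' contains no occurrence of the two-symbol substrings %_ or %%) and has the same language as p: a string w ∈ Σ* matches p' if and only if w matches p. -/
/-!
As languages, `%%` equals `%` and `%_` equals `_%`. Hence a `%` put in front of a normalized
pattern can be moved to the right past the leading block of `_`, where it is absorbed by a `%`
standing there or stays in front of a constant or at the end. This is `consPercent`; it keeps the
pattern normalized (`normalized_consPercent`) and has the language of `% :: p`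
(`matches_consPercent`). The theorem follows by induction on the pattern, as prepending a
constant or `_` to a normalized pattern never creates a forbidden factor.
-/

/-- A symbol of a LIKE pattern: a constant letter, the single-character
wildcard `_`, or the multi-character wildcard `%`. -/
inductive LikeSym (α : Type) : Type where
  | const : α → LikeSym α
  | wild : LikeSym α      -- the single-character wildcard `_`
  | percent : LikeSym α   -- the multi-character wildcard `%`

/-- The strings matched by a single pattern symbol. -/
def SymMatches {α : Type} : LikeSym α → List α → Prop
  | .const a, w => w = [a]
  | .wild, w => w.length = 1
  | .percent, _ => True

/-- A string `w` matches a LIKE pattern `p` if `w` splits into consecutive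
factors, one per pattern symbol. -/
def Matches {α : Type} : List (LikeSym α) → List α → Prop
  | [], w => w = []
  | s :: p, w => ∃ u v, w = u ++ v ∧ SymMatches s u ∧ Matches p v

/-- A LIKE pattern is normalized if it contains neither `%_` nor `%%`
as a (contiguous) substring. -/
def Normalized {α : Type} (p : List (LikeSym α)) : Prop :=
  ¬ [LikeSym.percent, LikeSym.wild] <:+: p ∧
  ¬ [LikeSym.percent, LikeSym.percent] <:+: p

/-- Puts a `%` in front of a pattern, moving it to the right past the leading `_` symbols and
merging it with a `%` found there. -/
def consPercent {α : Type} : List (LikeSym α) → List (LikeSym α)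
  | [] => [.percent]
  | .const a :: p => .percent :: .const a :: p
  | .wild :: p => .wild :: consPercent p
  | .percent :: p => .percent :: p

theorem normalized_nil {α : Type} : Normalized ([] : List (LikeSym α)) := by
  simp [Normalized]

theorem normalized_const_cons {α : Type} (a : α) (p : List (LikeSym α)) :
    Normalized (.const a :: p) ↔ Normalized p := by
  simp [Normalized, List.infix_cons_iff, List.cons_prefix_cons]

theorem normalized_wild_cons {α : Type} (p : List (LikeSym α)) :
    Normalized (.wild :: p) ↔ Normalized p := by
  simp [Normalized, List.infix_cons_iff, List.cons_prefix_cons]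

theorem normalized_consPercent {α : Type} (p : List (LikeSym α)) (hp : Normalized p) :
    Normalized (consPercent p) := by
  induction p with
  | nil => simp [consPercent, Normalized, List.infix_cons_iff, List.cons_prefix_cons]
  | cons s p ih =>
    cases s with
    | const a =>
      simpa [consPercent, Normalized, List.infix_cons_iff, List.cons_prefix_cons] using hp
    | wild => exact (normalized_wild_cons _).2 (ih ((normalized_wild_cons _).1 hp))
    | percent => exact hp

theorem matches_cons_congr {α : Type} (s : LikeSym α) {p q : List (LikeSym α)}
    (h : ∀ w, Matches p w ↔ Matches q w) (w : List α) :
    Matches (s :: p) w ↔ Matches (s :: q) w := by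
  simp only [Matches, h]

theorem matches_percent_percent {α : Type} (p : List (LikeSym α)) (w : List α) :
    Matches (.percent :: .percent :: p) w ↔ Matches (.percent :: p) w := by
  constructor
  · rintro ⟨u, _, rfl, -, u', v, rfl, -, h⟩
    exact ⟨u ++ u', v, by simp, trivial, h⟩
  · rintro ⟨u, v, rfl, -, h⟩
    exact ⟨u, v, rfl, trivial, [], v, rfl, trivial, h⟩

/-- Both sides say that some nonempty prefix can be removed to leave a match of `p`; the letter
read by `_` is the first one of that prefix on the left and the last one on the right. -/
theorem matches_wild_percent {α : Type} (p : List (LikeSym α)) (w : List α) :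
    Matches (.wild :: .percent :: p) w ↔ Matches (.percent :: .wild :: p) w := by
  constructor
  · rintro ⟨u, _, rfl, hu, u', v, rfl, -, h⟩
    have hne : u ++ u' ≠ [] := by
      intro h0
      simp_all [SymMatches]
    refine ⟨(u ++ u').dropLast, [(u ++ u').getLast hne] ++ v, ?_, trivial, _, v, rfl, rfl, h⟩
    rw [← List.append_assoc, ← List.append_assoc, List.dropLast_append_getLast]
  · rintro ⟨u, _, rfl, -, u', v, rfl, hu, h⟩
    cases hc : u ++ u' with
    | nil => simp_all [SymMatches]
    | cons a t =>
      refine ⟨[a], t ++ v, ?_, rfl, t, v, rfl, trivial, h⟩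
      rw [← List.append_assoc, hc]
      rfl

theorem matches_consPercent {α : Type} (p : List (LikeSym α)) (w : List α) :
    Matches (consPercent p) w ↔ Matches (.percent :: p) w := by
  induction p generalizing w with
  | nil => rfl
  | cons s p ih =>
    cases s with
    | const a => rfl
    | wild => exact (matches_cons_congr .wild ih w).trans (matches_wild_percent p w)
    | percent => exact (matches_percent_percent p w).symm

/-- For every LIKE pattern there is an equivalent normalized LIKE pattern. -/
theorem exists_equivalent_normalized_pattern {α : Type} (p : List (LikeSym α)) :
    ∃ p' : List (LikeSym α), Normalized p' ∧ ∀ w : List α, Matches p' w ↔ Matches p w := by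
  induction p with
  | nil => exact ⟨[], normalized_nil, fun _ => Iff.rfl⟩
  | cons s p ih =>
    obtain ⟨q, hq, h⟩ := ih
    cases s with
    | const a => exact ⟨.const a :: q, (normalized_const_cons a q).2 hq, matches_cons_congr _ h⟩
    | wild => exact ⟨.wild :: q, (normalized_wild_cons q).2 hq, matches_cons_congr _ h⟩
    | percent =>
      exact ⟨consPercent q, normalized_consPercent q hq, fun w =>
        (matches_consPercent q w).trans (matches_cons_congr _ h w)⟩
end

section
/- If the language of a single LIKE pattern p over an alphabet Σ (with Σ nonempty) is finite, then all strings in that language have the same length. Consequently, for an alphabet Σ with |Σ| ≥ 2 and a letter a ∈ Σ, the two-element language {a, ε} (consisting of the one-letter string a and the empty string) is not the language of any single LIKE pattern over Σ. -/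
theorem length_eq_of_percent_notMem {α : Type} (p : List (LikeSym α))
    (hp : LikeSym.percent ∉ p) (w : List α) (hw : Matches p w) : w.length = p.length := by
  induction p generalizing w with
  | nil =>
    have h : w = [] := hw
    simp [h]
  | cons s p ih =>
    obtain ⟨u, v, rfl, hu, hv⟩ := hw
    simp only [List.mem_cons, not_or] at hp
    have hlen := ih hp.2 v hv
    have hu1 : u.length = 1 := by
      cases s with
      | const a =>
        have h : u = [a] := hu
        simp [h]
      | wild => exact hu
      | percent => exact absurd rfl hp.1
    simp only [List.length_append, List.length_cons]
    omega

theorem exists_long_of_percent_mem {α : Type} [Nonempty α] (p : List (LikeSym α))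
    (hp : LikeSym.percent ∈ p) (w : List α) (hw : Matches p w) (n : ℕ) :
    ∃ w' : List α, Matches p w' ∧ n ≤ w'.length := by
  induction p generalizing w with
  | nil => simp at hp
  | cons s p ih =>
    obtain ⟨u, v, rfl, hu, hv⟩ := hw
    rcases List.mem_cons.1 hp with rfl | hp
    · exact ⟨List.replicate n (Classical.arbitrary α) ++ v, ⟨_, v, rfl, trivial, hv⟩, by simp⟩
    · obtain ⟨v', hv', hn⟩ := ih hp v hv
      exact ⟨u ++ v', ⟨u, v', rfl, hu, hv'⟩, by simp only [List.length_append]; omega⟩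

theorem percent_notMem_of_finite {α : Type} [Nonempty α] (p : List (LikeSym α))
    (hfin : ({w : List α | Matches p w}).Finite) (w : List α) (hw : Matches p w) :
    LikeSym.percent ∉ p := by
  intro hp
  obtain ⟨N, hN⟩ := (hfin.image List.length).bddAbove
  obtain ⟨w', hw', hlen⟩ := exists_long_of_percent_mem p hp w hw (N + 1)
  have h : w'.length ≤ N := hN ⟨w', hw', rfl⟩
  omega

/-- If the language of a single LIKE pattern over a nonempty alphabet is finite,
then all strings in it have the same length; consequently, over an alphabet with
at least two letters, `{a, ε}` is not the language of any single LIKE pattern. -/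
theorem finite_like_language_uniform_length {α : Type} [Nonempty α] :
    (∀ p : List (LikeSym α), ({w : List α | Matches p w}).Finite →
      ∀ w₁ w₂ : List α, Matches p w₁ → Matches p w₂ → w₁.length = w₂.length) ∧
    (∀ a b : α, a ≠ b → ∀ p : List (LikeSym α),
      {w : List α | Matches p w} ≠ ({[a], []} : Set (List α))) := by
  have uniform : ∀ p : List (LikeSym α), ({w : List α | Matches p w}).Finite →
      ∀ w₁ w₂ : List α, Matches p w₁ → Matches p w₂ → w₁.length = w₂.length := by
    intro p hfin w₁ w₂ h₁ h₂
    have hp := percent_notMem_of_finite p hfin w₁ h₁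
    rw [length_eq_of_percent_notMem p hp w₁ h₁, length_eq_of_percent_notMem p hp w₂ h₂]
  refine ⟨uniform, fun a b _ p hL => ?_⟩
  have hfin : ({w : List α | Matches p w}).Finite := by
    rw [hL]
    exact Set.toFinite _
  have h₁ : [a] ∈ {w : List α | Matches p w} := by simp [hL]
  have h₂ : [] ∈ {w : List α | Matches p w} := by simp [hL]
  simpa using uniform p hfin [a] [] h₁ h₂
end

section
/- Let Σ be a finite alphabet. A language L ⊆ Σ* is LIKE-characterizable (i.e., L is the language of some boolean combination of LIKE pattern matching conditions) if and only if L belongs to the boolean closure (under finite union, finite intersection, and complement relative to Σ*) of the family of languages of the form u_0 Σ* u_1 Σ* ⋯ Σ* u_s, where s ≥ 0 and u_0, u_1, …, u_s ∈ Σ* are words. -/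
/-- A LIKE expression: a boolean combination (AND, OR, NOT) of LIKE patterns. -/
inductive LikeExpr (α : Type) : Type where
  | pat : List (LikeSym α) → LikeExpr α
  | and : LikeExpr α → LikeExpr α → LikeExpr α
  | or : LikeExpr α → LikeExpr α → LikeExpr α
  | not : LikeExpr α → LikeExpr α

/-- A string matches a LIKE expression if the boolean combination of the
individual pattern-matching conditions evaluates to true. -/
def EMatches {α : Type} : LikeExpr α → List α → Prop
  | .pat p, w => Matches p w
  | .and e f, w => EMatches e w ∧ EMatches f w
  | .or e f, w => EMatches e w ∨ EMatches f w
  | .not e, w => ¬ EMatches e w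

/-- A LIKE expression is monotone if it contains no negation. -/
def MonotoneExpr {α : Type} : LikeExpr α → Prop
  | .pat _ => True
  | .and e f => MonotoneExpr e ∧ MonotoneExpr f
  | .or e f => MonotoneExpr e ∧ MonotoneExpr f
  | .not _ => False
/-- The boolean closure of a family `X` of sets: the smallest family containing
`X` that is closed under (finite) union, (finite) intersection, and complement. -/
inductive BoolClosure {β : Type} (X : Set (Set β)) : Set β → Prop
  | base {L : Set β} : L ∈ X → BoolClosure X L
  | union {L M : Set β} : BoolClosure X L → BoolClosure X M → BoolClosure X (L ∪ M)
  | inter {L M : Set β} : BoolClosure X L → BoolClosure X M → BoolClosure X (L ∩ M)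
  | compl {L : Set β} : BoolClosure X L → BoolClosure X Lᶜ

/-- For a nonempty list of words `[u₀, u₁, …, uₛ]`, the language
`u₀ Σ* u₁ Σ* ⋯ Σ* uₛ` of strings `u₀ v₁ u₁ v₂ ⋯ vₛ uₛ`. -/
def SegLang {α : Type} : List (List α) → Set (List α)
  | [] => {([] : List α)}
  | [u] => {u}
  | u :: us => {w : List α | ∃ v r : List α, w = u ++ v ++ r ∧ r ∈ SegLang us}

/-- The list of words `us = [u₀, …, uₛ]` with the letter `a` put in front of `u₀`; an empty
list is read as the single empty word, in accordance with `SegLang []`. -/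
def consHead {α : Type} (a : α) : List (List α) → List (List α)
  | [] => [[a]]
  | u :: us => (a :: u) :: us

theorem consHead_ne_nil {α : Type} (a : α) (us : List (List α)) : consHead a us ≠ [] := by
  cases us <;> simp [consHead]

theorem mem_segLang_cons {α : Type} (u : List α) {us : List (List α)} (hus : us ≠ [])
    (w : List α) :
    w ∈ SegLang (u :: us) ↔ ∃ v r : List α, w = u ++ v ++ r ∧ r ∈ SegLang us := by
  cases us with
  | nil => exact absurd rfl hus
  | cons x xs => simp [SegLang]

theorem mem_segLang_consHead {α : Type} (a : α) (us : List (List α)) (w : List α) :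
    w ∈ SegLang (consHead a us) ↔ ∃ v, w = a :: v ∧ v ∈ SegLang us := by
  rcases us with _ | ⟨u, _ | ⟨x, xs⟩⟩
  · simp [consHead, SegLang]
  · simp [consHead, SegLang]
  · simp only [consHead]
    rw [mem_segLang_cons _ (by simp)]
    constructor
    · rintro ⟨v, r, rfl, hr⟩
      exact ⟨u ++ v ++ r, by simp, (mem_segLang_cons _ (by simp) _).2 ⟨v, r, rfl, hr⟩⟩
    · rintro ⟨v, rfl, hv⟩
      obtain ⟨x', r, rfl, hr⟩ := (mem_segLang_cons _ (by simp) _).1 hv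
      exact ⟨x', r, by simp, hr⟩

theorem matches_const_cons {α : Type} (a : α) (p : List (LikeSym α)) (w : List α) :
    Matches (.const a :: p) w ↔ ∃ v, w = a :: v ∧ Matches p v := by
  simp [Matches, SymMatches]

theorem matches_wild_cons {α : Type} (p : List (LikeSym α)) (w : List α) :
    Matches (.wild :: p) w ↔ ∃ a v, w = a :: v ∧ Matches p v := by
  simp only [Matches, SymMatches, List.length_eq_one_iff]
  constructor
  · rintro ⟨_, v, rfl, ⟨a, rfl⟩, h⟩
    exact ⟨a, v, rfl, h⟩
  · rintro ⟨a, v, rfl, h⟩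
    exact ⟨[a], v, rfl, ⟨a, rfl⟩, h⟩

theorem matches_percent_cons {α : Type} (p : List (LikeSym α)) (w : List α) :
    Matches (.percent :: p) w ↔ ∃ u v, w = u ++ v ∧ Matches p v := by
  simp [Matches, SymMatches]

theorem matches_map_const_append {α : Type} (u : List α) (p : List (LikeSym α)) (w : List α) :
    Matches (u.map .const ++ p) w ↔ ∃ v, w = u ++ v ∧ Matches p v := by
  induction u generalizing w with
  | nil => simp
  | cons a u ih =>
    simp only [List.map_cons, List.cons_append, matches_const_cons, ih]
    constructor
    · rintro ⟨_, rfl, v, rfl, h⟩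
      exact ⟨v, rfl, h⟩
    · rintro ⟨v, rfl, h⟩
      exact ⟨_, rfl, v, rfl, h⟩

/-- Writing each gap `Σ*` as `%` turns `u₀ Σ* u₁ Σ* ⋯ Σ* uₛ` into a single pattern. -/
theorem exists_pattern_of_segLang {α : Type} (us : List (List α)) :
    ∃ p : List (LikeSym α), ∀ w, w ∈ SegLang us ↔ Matches p w := by
  induction us with
  | nil => exact ⟨[], fun w => by simp [SegLang, Matches]⟩
  | cons u us ih =>
    rcases eq_or_ne us [] with rfl | hus
    · refine ⟨u.map .const ++ [], fun w => ?_⟩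
      rw [matches_map_const_append]
      simp [SegLang, Matches]
    · obtain ⟨p, hp⟩ := ih
      refine ⟨u.map .const ++ .percent :: p, fun w => ?_⟩
      rw [mem_segLang_cons u hus, matches_map_const_append]
      simp only [matches_percent_cons, hp]
      constructor
      · rintro ⟨v, r, rfl, h⟩
        exact ⟨v ++ r, by simp, v, r, rfl, h⟩
      · rintro ⟨_, rfl, v, r, rfl, h⟩
        exact ⟨v, r, by simp, h⟩

/-- Expanding every `_` over all letters writes the language of a pattern as a finite union of
languages `u₀ Σ* u₁ Σ* ⋯ Σ* uₛ`. This is where finiteness of the alphabet enters. -/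
theorem exists_finite_segLang_of_pattern {α : Type} [Fintype α] (p : List (LikeSym α)) :
    ∃ S : Set (List (List α)), S.Finite ∧ (∀ us ∈ S, us ≠ []) ∧
      ∀ w, Matches p w ↔ ∃ us ∈ S, w ∈ SegLang us := by
  induction p with
  | nil => exact ⟨{[[]]}, Set.finite_singleton _, by simp, fun w => by simp [Matches, SegLang]⟩
  | cons s p ih =>
    obtain ⟨S, hfin, hne, hS⟩ := ih
    cases s with
    | const a =>
      refine ⟨consHead a '' S, hfin.image _, ?_, fun w => ?_⟩
      · rintro _ ⟨us, -, rfl⟩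
        exact consHead_ne_nil a us
      · simp only [matches_const_cons, Set.exists_mem_image, mem_segLang_consHead, hS]
        grind
    | wild =>
      refine ⟨⋃ a : α, consHead a '' S, Set.finite_iUnion fun a => hfin.image _, ?_, fun w => ?_⟩
      · intro _ h
        obtain ⟨a, us, -, rfl⟩ := Set.mem_iUnion.1 h
        exact consHead_ne_nil a us
      · simp only [matches_wild_cons, hS, Set.mem_iUnion]
        constructor
        · rintro ⟨a, v, rfl, us, hus, hv⟩
          exact ⟨_, ⟨a, us, hus, rfl⟩, (mem_segLang_consHead _ _ _).2 ⟨v, rfl, hv⟩⟩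
        · rintro ⟨_, ⟨a, us, hus, rfl⟩, h⟩
          obtain ⟨v, rfl, hv⟩ := (mem_segLang_consHead _ _ _).1 h
          exact ⟨a, v, rfl, us, hus, hv⟩
    | percent =>
      refine ⟨List.cons [] '' S, hfin.image _, ?_, fun w => ?_⟩
      · rintro _ ⟨us, -, rfl⟩
        simp
      · simp only [matches_percent_cons, Set.exists_mem_image, hS]
        constructor
        · rintro ⟨u, v, rfl, us, hus, hv⟩
          exact ⟨us, hus, (mem_segLang_cons _ (hne us hus) _).2 ⟨u, v, rfl, hv⟩⟩
        · rintro ⟨us, hus, h⟩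
          obtain ⟨u, v, rfl, hv⟩ := (mem_segLang_cons _ (hne us hus) _).1 h
          exact ⟨u, v, rfl, us, hus, hv⟩

/-- The empty union is obtained as `M ∩ Mᶜ`, so the generating family must be nonempty. -/
theorem BoolClosure.biUnion {β ι : Type} {X : Set (Set β)} (hX : X.Nonempty) {S : Set ι}
    (hS : S.Finite) {f : ι → Set β} (hf : ∀ i ∈ S, BoolClosure X (f i)) :
    BoolClosure X (⋃ i ∈ S, f i) := by
  induction S, hS using Set.Finite.induction_on with
  | empty =>
    obtain ⟨M, hM⟩ := hX
    have h := (BoolClosure.base hM).inter (BoolClosure.base hM).compl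
    simpa using h
  | @insert a s _ _ ih =>
    rw [Set.biUnion_insert]
    exact (hf a (Set.mem_insert _ _)).union (ih fun i hi => hf i (Set.mem_insert_of_mem _ hi))

/-- Over a finite alphabet, a language is LIKE-characterizable iff it lies in the
boolean closure of the languages of the form `u₀ Σ* u₁ Σ* ⋯ Σ* uₛ`. -/
theorem like_characterizable_iff_boolean_closure {α : Type} [Fintype α]
    (L : Set (List α)) :
    (∃ e : LikeExpr α, L = {w : List α | EMatches e w}) ↔
      BoolClosure
        {M : Set (List α) | ∃ us : List (List α), us ≠ [] ∧ M = SegLang us} L := by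
  constructor
  · rintro ⟨e, rfl⟩
    induction e with
    | pat p =>
      obtain ⟨S, hfin, hne, hS⟩ := exists_finite_segLang_of_pattern p
      have h : {w | EMatches (.pat p) w} = ⋃ us ∈ S, SegLang us := by
        ext w
        simp [EMatches, hS]
      rw [h]
      apply BoolClosure.biUnion _ hfin
      · exact fun us hus => .base ⟨us, hne us hus, rfl⟩
      · exact ⟨SegLang [[]], [[]], by simp, rfl⟩
    | and e f he hf => exact he.inter hf
    | or e f he hf => exact he.union hf
    | not e he => exact he.compl
  · intro h
    induction h with
    | base h =>
      obtain ⟨us, -, rfl⟩ := h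
      obtain ⟨p, hp⟩ := exists_pattern_of_segLang us
      exact ⟨.pat p, Set.ext hp⟩
    | union _ _ h₁ h₂ =>
      obtain ⟨e, rfl⟩ := h₁
      obtain ⟨f, rfl⟩ := h₂
      exact ⟨.or e f, rfl⟩
    | inter _ _ h₁ h₂ =>
      obtain ⟨e, rfl⟩ := h₁
      obtain ⟨f, rfl⟩ := h₂
      exact ⟨.and e f, rfl⟩
    | compl _ h₁ =>
      obtain ⟨e, rfl⟩ := h₁
      exact ⟨.not e, rfl⟩
end

section
/- Let Σ be a finite alphabet with |Σ| ≥ 2. Then every finite language L ⊆ Σ* is the language of some monotone LIKE expression over Σ, and every cofinite language L ⊆ Σ* (a language whose complement in Σ* is finite) is the language of some monotone LIKE expression over Σ. -/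
/-- `L` is the language of some monotone LIKE expression. -/
def MonotoneExpressible {α : Type} (L : Set (List α)) : Prop :=
  ∃ e : LikeExpr α, MonotoneExpr e ∧ L = {w : List α | EMatches e w}

theorem matches_map_const {α : Type} (u w : List α) :
    Matches (u.map LikeSym.const) w ↔ w = u := by
  induction u generalizing w with
  | nil => simp [Matches]
  | cons a u ih => simp [Matches, SymMatches, ih]

theorem matches_wilds_percent {α : Type} (n : ℕ) (w : List α) :
    Matches (List.replicate n LikeSym.wild ++ [LikeSym.percent]) w ↔ n ≤ w.length := by
  induction n generalizing w with
  | zero => simp [Matches, SymMatches]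
  | succ n ih =>
    simp only [List.replicate_succ, List.cons_append, Matches, SymMatches, ih]
    constructor
    · rintro ⟨u, v, rfl, hu, hv⟩
      simp only [List.length_append]
      omega
    · intro h
      cases w with
      | nil => simp at h
      | cons a w => exact ⟨[a], w, rfl, rfl, by simpa using h⟩

theorem MonotoneExpressible.union {α : Type} {L M : Set (List α)}
    (hL : MonotoneExpressible L) (hM : MonotoneExpressible M) :
    MonotoneExpressible (L ∪ M) := by
  obtain ⟨e, he, rfl⟩ := hL
  obtain ⟨f, hf, rfl⟩ := hM
  exact ⟨.or e f, ⟨he, hf⟩, rfl⟩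

theorem monotoneExpressible_singleton {α : Type} (u : List α) :
    MonotoneExpressible {u} := by
  refine ⟨.pat (u.map .const), trivial, ?_⟩
  ext w
  simp [EMatches, matches_map_const]

theorem monotoneExpressible_length_ge {α : Type} (n : ℕ) :
    MonotoneExpressible {w : List α | n ≤ w.length} := by
  refine ⟨.pat (List.replicate n .wild ++ [.percent]), trivial, ?_⟩
  ext w
  simp [EMatches, matches_wilds_percent]

theorem monotoneExpressible_empty {α : Type} {a b : α} (hab : a ≠ b) :
    MonotoneExpressible (∅ : Set (List α)) := by
  refine ⟨.and (.pat ([a].map .const)) (.pat ([b].map .const)), ⟨trivial, trivial⟩, ?_⟩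
  ext w
  simp only [Set.mem_empty_iff_false, Set.mem_ofPred_eq, EMatches, matches_map_const, false_iff]
  rintro ⟨rfl, h⟩
  exact hab (by simpa using h)

theorem monotoneExpressible_of_finite {α : Type} {a b : α} (hab : a ≠ b)
    {L : Set (List α)} (hL : L.Finite) : MonotoneExpressible L := by
  induction L, hL using Set.Finite.induction_on with
  | empty => exact monotoneExpressible_empty hab
  | insert _ _ ih =>
    rw [Set.insert_eq]
    exact (monotoneExpressible_singleton _).union ih

/-- Over a finite alphabet with at least two letters, every finite language and
every cofinite language is the language of some monotone LIKE expression. -/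
theorem finite_and_cofinite_monotone_like_expressible {α : Type} [Fintype α]
    (hcard : 2 ≤ Fintype.card α) :
    (∀ L : Set (List α), L.Finite →
      ∃ e : LikeExpr α, MonotoneExpr e ∧ L = {w : List α | EMatches e w}) ∧
    (∀ L : Set (List α), Lᶜ.Finite →
      ∃ e : LikeExpr α, MonotoneExpr e ∧ L = {w : List α | EMatches e w}) := by
  obtain ⟨a, b, hab⟩ := Fintype.one_lt_card_iff.mp hcard
  refine ⟨fun L hL => monotoneExpressible_of_finite hab hL, fun L hL => ?_⟩
  obtain ⟨N, hN⟩ := (hL.image List.length).bddAbove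
  have hlong : ∀ w : List α, N + 1 ≤ w.length → w ∈ L := by
    intro w hw
    by_contra h
    have : w.length ≤ N := hN ⟨w, h, rfl⟩
    omega
  have hsplit : L = (L ∩ {w | w.length < N + 1}) ∪ {w | N + 1 ≤ w.length} := by
    ext w
    have := hlong w
    simp only [Set.mem_union, Set.mem_inter_iff, Set.mem_ofPred_eq]
    rcases lt_or_ge w.length (N + 1) with h | h
    · simp [h, not_le.mpr h]
    · simp [h, this h]
  change MonotoneExpressible L
  rw [hsplit]
  exact (monotoneExpressible_of_finite hab
    ((List.finite_length_lt α (N + 1)).inter_of_right L)).union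
    (monotoneExpressible_length_ge (N + 1))
end

section
/- Let Σ be an alphabet with at least two symbols and let Σ' be a nonempty proper subset of Σ. Then no monotone LIKE expression over Σ has language exactly Σ'* (the set of all strings all of whose symbols belong to Σ'). Hence monotone LIKE expressions are strictly weaker than general LIKE expressions. -/
/-- Some set of at most `p.length` pinned positions has the property that changing the letter at
any other position preserves the match. -/
theorem Matches.exists_pinned {α : Type} (p : List (LikeSym α)) :
    ∀ w : List α, Matches p w → ∃ B : Finset ℕ, B.card ≤ p.length ∧
      ∀ i, i ∉ B → ∀ d, Matches p (w.set i d) := by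
  induction p with
  | nil =>
    intro w hw
    refine ⟨∅, by simp, fun i _ d => ?_⟩
    simp only [Matches] at hw ⊢
    simp [hw]
  | cons s p ih =>
    rintro w ⟨u, v, rfl, hs, hv⟩
    obtain ⟨B, hBcard, hB⟩ := ih v hv
    -- Pinned positions of `v`, seen inside `u ++ v`.
    have hshift : ∀ i, i ∉ B.image (· + u.length) → u.length ≤ i → ∀ d,
        Matches (s :: p) ((u ++ v).set i d) := by
      intro i hi hle d
      refine ⟨u, v.set (i - u.length) d, List.set_append_right i d hle, hs, hB _ ?_ d⟩
      exact fun hmem => hi (Finset.mem_image.2 ⟨_, hmem, Nat.sub_add_cancel hle⟩)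
    -- A factor of length one contributes its only position, which is `0` in `u ++ v`.
    have hone : u.length = 1 → ∃ B : Finset ℕ, B.card ≤ (s :: p).length ∧
        ∀ i, i ∉ B → ∀ d, Matches (s :: p) ((u ++ v).set i d) := by
      intro hu
      refine ⟨insert 0 (B.image (· + u.length)), ?_, fun i hi d => ?_⟩
      · have h₁ := Finset.card_insert_le 0 (B.image (· + u.length))
        have h₂ := Finset.card_image_le (s := B) (f := (· + u.length))
        simp only [List.length_cons]
        omega
      · rw [Finset.mem_insert, not_or] at hi
        exact hshift i hi.2 (by omega) d
    cases s with
    | const x => exact hone (by rw [show u = [x] from hs]; rfl)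
    | wild => exact hone hs
    | percent =>
      refine ⟨B.image (· + u.length), ?_, fun i hi d => ?_⟩
      · exact Finset.card_image_le.trans (hBcard.trans (by simp))
      · rcases lt_or_ge i u.length with hlt | hle
        · exact ⟨u.set i d, v, List.set_append_left i d hlt, trivial, hv⟩
        · exact hshift i hi hle d

/-- The bound on pinned positions for a monotone expression is uniform in the matching string. -/
theorem EMatches.exists_pinned {α : Type} (e : LikeExpr α) (he : MonotoneExpr e) :
    ∃ N : ℕ, ∀ w : List α, EMatches e w → ∃ B : Finset ℕ, B.card ≤ N ∧
      ∀ i, i ∉ B → ∀ d, EMatches e (w.set i d) := by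
  induction e with
  | pat p => exact ⟨p.length, Matches.exists_pinned p⟩
  | and e f ihe ihf =>
    obtain ⟨M, hM⟩ := ihe he.1
    obtain ⟨N, hN⟩ := ihf he.2
    refine ⟨M + N, fun w hw => ?_⟩
    obtain ⟨B, hBcard, hB⟩ := hM w hw.1
    obtain ⟨C, hCcard, hC⟩ := hN w hw.2
    refine ⟨B ∪ C, (Finset.card_union_le B C).trans (by omega), fun i hi d => ?_⟩
    rw [Finset.mem_union, not_or] at hi
    exact ⟨hB i hi.1 d, hC i hi.2 d⟩
  | or e f ihe ihf =>
    obtain ⟨M, hM⟩ := ihe he.1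
    obtain ⟨N, hN⟩ := ihf he.2
    refine ⟨M + N, fun w hw => ?_⟩
    rcases hw with hw | hw
    · obtain ⟨B, hBcard, hB⟩ := hM w hw
      exact ⟨B, by omega, fun i hi d => Or.inl (hB i hi d)⟩
    · obtain ⟨B, hBcard, hB⟩ := hN w hw
      exact ⟨B, by omega, fun i hi d => Or.inr (hB i hi d)⟩
  | not e _ => exact he.elim

theorem MonotoneExpr.language_ne_star {α : Type} (S : Set α) (hS : S.Nonempty)
    (hSproper : S ≠ Set.univ) (e : LikeExpr α) (he : MonotoneExpr e) :
    {w : List α | EMatches e w} ≠ {w : List α | ∀ x ∈ w, x ∈ S} := by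
  intro heq
  obtain ⟨c, hc⟩ := hS
  obtain ⟨d, hd⟩ := (Set.ne_univ_iff_exists_notMem S).1 hSproper
  have hiff : ∀ w : List α, EMatches e w ↔ ∀ x ∈ w, x ∈ S := Set.ext_iff.1 heq
  obtain ⟨N, hN⟩ := EMatches.exists_pinned e he
  obtain ⟨B, hBcard, hB⟩ := hN (List.replicate (N + 1) c)
    ((hiff _).2 fun x hx => (List.eq_of_mem_replicate hx) ▸ hc)
  obtain ⟨i, hi, hiB⟩ : ∃ i ∈ Finset.range (N + 1), i ∉ B :=
    Finset.exists_mem_notMem_of_card_lt_card (by rw [Finset.card_range]; omega)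
  refine hd ((hiff _).1 (hB i hiB d) d (List.mem_set ?_ d))
  simpa using hi

theorem matches_percent_const_percent {α : Type} (b : α) (w : List α) :
    Matches [.percent, .const b, .percent] w ↔ b ∈ w := by
  constructor
  · rintro ⟨u, _, rfl, -, x, v, rfl, hx, -⟩
    rw [show x = [b] from hx]
    simp
  · intro hb
    obtain ⟨u, v, rfl⟩ := List.append_of_mem hb
    exact ⟨u, b :: v, rfl, trivial, [b], v, rfl, rfl, v, [], by simp, trivial, rfl⟩

/-- Over an alphabet with at least two symbols, no monotone LIKE expression has
language exactly `Σ'*` for a nonempty proper subset `Σ' ⊊ Σ`; hence monotone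
LIKE expressions are strictly weaker than general LIKE expressions. -/
theorem monotone_like_cannot_express_subalphabet_star {α : Type}
    (a b : α) (hab : a ≠ b) (S : Set α) (hS : S.Nonempty) (hSproper : S ≠ Set.univ) :
    (∀ e : LikeExpr α, MonotoneExpr e →
      {w : List α | EMatches e w} ≠ {w : List α | ∀ x ∈ w, x ∈ S}) ∧
    (∃ L : Set (List α), (∃ e : LikeExpr α, L = {w : List α | EMatches e w}) ∧
      ¬ ∃ e : LikeExpr α, MonotoneExpr e ∧ L = {w : List α | EMatches e w}) := by
  refine ⟨MonotoneExpr.language_ne_star S hS hSproper, {w | ∀ x ∈ w, x ∈ ({b}ᶜ : Set α)},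
    ⟨.not (.pat [.percent, .const b, .percent]), ?_⟩, ?_⟩
  · ext w
    change _ ↔ ¬ Matches _ w
    rw [matches_percent_const_percent]
    exact ⟨fun h hb => h b hb rfl, fun h x hx hxb => h (hxb ▸ hx)⟩
  · rintro ⟨e, he, heq⟩
    exact MonotoneExpr.language_ne_star ({b}ᶜ : Set α) ⟨a, hab⟩
      ((Set.ne_univ_iff_exists_notMem _).2 ⟨b, fun h => h rfl⟩) e he heq.symm
end

section
/- Let e be a monotone LIKE expression over an alphabet Σ and let N(e) denote the total number of constant symbols and single-character wildcards _ occurring in all patterns of e (occurrences of % are not counted). If some string over Σ matches e, then there exists a string w over Σ with |w| ≤ N(e) that matches e. -/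
/-- Test whether a pattern symbol is the multi-character wildcard `%`. -/
def isPercent {α : Type} : LikeSym α → Bool
  | .percent => true
  | _ => false

/-- The number of constant symbols and single-character wildcards `_` in a pattern
(occurrences of `%` are not counted). -/
def patN {α : Type} (p : List (LikeSym α)) : ℕ :=
  p.countP (fun s => !isPercent s)

/-- The total number of constant symbols and single-character wildcards `_`
occurring in all patterns of a LIKE expression. -/
def exprN {α : Type} : LikeExpr α → ℕ
  | .pat p => patN p
  | .and e f => exprN e + exprN f
  | .or e f => exprN e + exprN f
  | .not e => exprN e

/-- The string read off from the list of positions `l`, where `f` gives the letter at each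
position, can be cut down to any set of positions containing a suitable `S` of size at most
`patN p`. -/
theorem matches_core {α ι : Type} [DecidableEq ι] (f : ι → α) (p : List (LikeSym α)) :
    ∀ l : List ι, Matches p (l.map f) →
      ∃ S : Finset ι, S.card ≤ patN p ∧
        ∀ T : Finset ι, S ⊆ T → Matches p ((l.filter (· ∈ T)).map f) := by
  induction p with
  | nil =>
    intro l h
    refine ⟨∅, by simp, fun T _ => ?_⟩
    have hl : l = [] := by simpa [Matches] using h
    simp [hl, Matches]
  | cons s p ih =>
    rintro l ⟨u, v, hl, hu, hv⟩
    obtain ⟨lu, lv, rfl, rfl, rfl⟩ := List.map_eq_append_iff.1 hl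
    obtain ⟨S, hS, hT⟩ := ih lv hv
    -- A constant or `_` matches a single position `i`, which is added to `S`.
    have single : ∀ i, lu = [i] → patN (s :: p) = patN p + 1 →
        ∃ S : Finset ι, S.card ≤ patN (s :: p) ∧
          ∀ T : Finset ι, S ⊆ T → Matches (s :: p) (((lu ++ lv).filter (· ∈ T)).map f) := by
      rintro i rfl hN
      refine ⟨insert i S, ?_, fun T hST => ?_⟩
      · have := Finset.card_insert_le i S
        omega
      · obtain ⟨hi, hS'⟩ := Finset.insert_subset_iff.1 hST
        exact ⟨[i].map f, (lv.filter (· ∈ T)).map f, by simp [hi], hu, hT T hS'⟩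
    cases s with
    | const a =>
      obtain ⟨i, hi⟩ : ∃ i, lu = [i] := by
        rw [← List.length_eq_one_iff]
        simpa using congrArg List.length (show lu.map f = [a] from hu)
      exact single i hi (by simp [patN, isPercent])
    | wild =>
      obtain ⟨i, hi⟩ : ∃ i, lu = [i] := by
        rw [← List.length_eq_one_iff]
        simpa [SymMatches] using hu
      exact single i hi (by simp [patN, isPercent])
    | percent =>
      refine ⟨S, by simpa [patN, isPercent] using hS, fun T hST => ?_⟩
      exact ⟨(lu.filter (· ∈ T)).map f, (lv.filter (· ∈ T)).map f, by simp, trivial, hT T hST⟩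

/-- The analogue of `matches_core` for monotone expressions. -/
theorem eMatches_core {α ι : Type} [DecidableEq ι] (f : ι → α) (l : List ι) (e : LikeExpr α) :
    MonotoneExpr e → EMatches e (l.map f) →
      ∃ S : Finset ι, S.card ≤ exprN e ∧
        ∀ T : Finset ι, S ⊆ T → EMatches e ((l.filter (· ∈ T)).map f) := by
  induction e with
  | pat p => exact fun _ h => matches_core f p l h
  | and e₁ e₂ ih₁ ih₂ =>
    rintro ⟨m₁, m₂⟩ ⟨h₁, h₂⟩
    obtain ⟨S₁, c₁, k₁⟩ := ih₁ m₁ h₁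
    obtain ⟨S₂, c₂, k₂⟩ := ih₂ m₂ h₂
    refine ⟨S₁ ∪ S₂, (Finset.card_union_le S₁ S₂).trans (Nat.add_le_add c₁ c₂), fun T hT => ?_⟩
    exact ⟨k₁ T (Finset.union_subset_left hT), k₂ T (Finset.union_subset_right hT)⟩
  | or e₁ e₂ ih₁ ih₂ =>
    rintro ⟨m₁, m₂⟩ (h | h)
    · obtain ⟨S, c, k⟩ := ih₁ m₁ h
      exact ⟨S, c.trans (Nat.le_add_right _ _), fun T hT => Or.inl (k T hT)⟩
    · obtain ⟨S, c, k⟩ := ih₂ m₂ h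
      exact ⟨S, c.trans (Nat.le_add_left _ _), fun T hT => Or.inr (k T hT)⟩
  | not e _ => exact fun m => m.elim

/-- If some string matches a monotone LIKE expression `e`, then some string of
length at most `N(e)` matches `e`. -/
theorem monotone_like_short_witness {α : Type} (e : LikeExpr α)
    (hmono : MonotoneExpr e) (hne : ∃ w : List α, EMatches e w) :
    ∃ w : List α, w.length ≤ exprN e ∧ EMatches e w := by
  obtain ⟨w, hw⟩ := hne
  obtain ⟨S, hS, hT⟩ := eMatches_core w.get (List.finRange w.length) e hmono
    (by rwa [List.map_get_finRange])
  refine ⟨_, ?_, hT S subset_rfl⟩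
  rw [List.length_map, ← List.toFinset_card_of_nodup ((List.nodup_finRange _).filter _)]
  refine (Finset.card_le_card fun i hi => ?_).trans hS
  simpa using hi
end

section
/- Let F = (α_1 ∨ β_1 ∨ γ_1) ∧ ⋯ ∧ (α_m ∨ β_m ∨ γ_m) be a boolean formula in 3-CNF over variables x_1, …, x_n, where each α_k, β_k, γ_k is a literal (a variable x_i or its negation x̄_i). Consider the alphabet Γ = {x_1, …, x_n, x̄_1, …, x̄_n} of 2n symbols and the monotone LIKE expression e over Γ given by the conjunction of: (i) the pattern _^n (n single-character wildcards); (ii) for every 1 ≤ i ≤ n, the disjunction of the patterns %x_i% and %x̄_i%; and (iii) for every clause 1 ≤ k ≤ m, the disjunction of the patterns %α_k%, %β_k%, and %γ_k%. Then F is satisfiable if and only if some string over Γ matches e. -/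
/-- A literal over variables `x_1, …, x_n` is a pair `(i, b)`: the variable `x_i`
if `b = true` and its negation `x̄_i` if `b = false`.  Literals also serve as the
symbols of the alphabet `Γ = {x_1, …, x_n, x̄_1, …, x̄_n}`. -/
abbrev Lit (n : ℕ) : Type := Fin n × Bool

/-- A literal evaluates to true under an assignment `σ` iff `σ` gives its
variable the corresponding sign. -/
def LitEval {n : ℕ} (σ : Fin n → Bool) (ℓ : Lit n) : Prop := σ ℓ.1 = ℓ.2

/-- The LIKE pattern `%ℓ%` for a literal `ℓ`, as a LIKE expression. -/
def litPat {n : ℕ} (ℓ : Lit n) : LikeExpr (Lit n) :=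
  .pat [LikeSym.percent, LikeSym.const ℓ, LikeSym.percent]

/-- The monotone LIKE expression associated with a 3-CNF formula with `n`
variables and clauses `F k = (α_k, β_k, γ_k)`: the conjunction of
(i) the pattern `_^n`,
(ii) for each variable `i` the disjunction `%x_i% OR %x̄_i%`, and
(iii) for each clause `k` the disjunction `%α_k% OR %β_k% OR %γ_k%`. -/
def cnfExpr (n m : ℕ) (F : Fin m → Lit n × Lit n × Lit n) : LikeExpr (Lit n) :=
  ((List.ofFn fun i : Fin n => LikeExpr.or (litPat (i, true)) (litPat (i, false))) ++
   (List.ofFn fun k : Fin m =>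
      LikeExpr.or (litPat (F k).1) (LikeExpr.or (litPat (F k).2.1) (litPat (F k).2.2)))
  ).foldr LikeExpr.and (.pat (List.replicate n LikeSym.wild))

theorem matches_replicate_wild {α : Type} (n : ℕ) (w : List α) :
    Matches (List.replicate n LikeSym.wild) w ↔ w.length = n := by
  induction n generalizing w with
  | zero => simp [Matches]
  | succ n ih =>
    simp only [List.replicate_succ, Matches, SymMatches, ih]
    constructor
    · rintro ⟨u, v, rfl, hu, hv⟩
      simp [hu, hv, Nat.add_comm]
    · intro h
      cases w with
      | nil => simp at h
      | cons a w => exact ⟨[a], w, rfl, rfl, by simpa using h⟩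

theorem eMatches_litPat {n : ℕ} (ℓ : Lit n) (w : List (Lit n)) :
    EMatches (litPat ℓ) w ↔ ℓ ∈ w := by
  simp only [litPat, EMatches, Matches, SymMatches]
  constructor
  · rintro ⟨u, v, rfl, -, u', v', rfl, rfl, -⟩
    simp
  · intro h
    obtain ⟨s, t, rfl⟩ := List.append_of_mem h
    exact ⟨s, ℓ :: t, rfl, trivial, [ℓ], t, rfl, rfl, t, [], by simp, trivial, rfl⟩

theorem eMatches_foldr_and {α : Type} (l : List (LikeExpr α)) (e : LikeExpr α) (w : List α) :
    EMatches (l.foldr LikeExpr.and e) w ↔ EMatches e w ∧ ∀ f ∈ l, EMatches f w := by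
  induction l with
  | nil => simp
  | cons a l ih =>
    simp only [List.foldr_cons, EMatches, ih, List.forall_mem_cons]
    tauto

theorem eMatches_cnfExpr_iff (n m : ℕ) (F : Fin m → Lit n × Lit n × Lit n) (w : List (Lit n)) :
    EMatches (cnfExpr n m F) w ↔
      w.length = n ∧ (∀ i : Fin n, (i, true) ∈ w ∨ (i, false) ∈ w) ∧
        ∀ k : Fin m, (F k).1 ∈ w ∨ (F k).2.1 ∈ w ∨ (F k).2.2 ∈ w := by
  simp only [cnfExpr, eMatches_foldr_and, List.forall_mem_append, List.forall_mem_ofFn_iff,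
    EMatches, eMatches_litPat, matches_replicate_wild]

/-- A word of length `n` in which every one of the `n` variables occurs contains each variable
only once, so its letters are determined by their variables. -/
theorem fst_injOn_of_length_eq {n : ℕ} (w : List (Lit n)) (hlen : w.length = n)
    (hvar : ∀ i : Fin n, (i, true) ∈ w ∨ (i, false) ∈ w) :
    ∀ a ∈ w, ∀ b ∈ w, a.1 = b.1 → a = b := by
  have huniv : (w.map Prod.fst).toFinset = Finset.univ := by
    ext i
    simp only [List.mem_toFinset, List.mem_map, Finset.mem_univ, iff_true]
    exact (hvar i).elim (fun h => ⟨_, h, rfl⟩) (fun h => ⟨_, h, rfl⟩)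
  have hnodup : (w.map Prod.fst).Nodup := by
    rw [← Multiset.coe_nodup, ← Multiset.toFinset_card_eq_card_iff_nodup]
    change (w.map Prod.fst).toFinset.card = (w.map Prod.fst).length
    rw [huniv]
    simp [hlen]
  intro a ha b hb hab
  exact List.inj_on_of_nodup_map hnodup ha hb hab

/-- A 3-CNF formula `F` is satisfiable iff some string over `Γ` matches the
associated monotone LIKE expression. -/
theorem threeSat_iff_cnfExpr_nonempty (n m : ℕ) (F : Fin m → Lit n × Lit n × Lit n) :
    (∃ σ : Fin n → Bool, ∀ k : Fin m,
        LitEval σ (F k).1 ∨ LitEval σ (F k).2.1 ∨ LitEval σ (F k).2.2) ↔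
      ∃ w : List (Lit n), EMatches (cnfExpr n m F) w := by
  simp only [eMatches_cnfExpr_iff]
  constructor
  · rintro ⟨σ, hσ⟩
    have hmem : ∀ ℓ : Lit n, LitEval σ ℓ → ℓ ∈ List.ofFn fun i => (i, σ i) := by
      rintro ⟨i, b⟩ h
      exact List.mem_ofFn.2 ⟨i, Prod.ext rfl h⟩
    refine ⟨List.ofFn fun i => (i, σ i), List.length_ofFn, fun i => ?_, fun k => ?_⟩
    · cases h : σ i
      · exact Or.inr (hmem (i, false) h)
      · exact Or.inl (hmem (i, true) h)
    · exact (hσ k).imp (hmem _) (Or.imp (hmem _) (hmem _))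
  · rintro ⟨w, hlen, hvar, hcl⟩
    have hinj := fst_injOn_of_length_eq w hlen hvar
    have heval : ∀ ℓ ∈ w, LitEval (fun i => decide ((i, true) ∈ w)) ℓ := by
      rintro ⟨i, b⟩ h
      cases b
      · refine decide_eq_false fun h' => ?_
        have heq := hinj _ h _ h' rfl
        simp at heq
      · exact decide_eq_true h
    exact ⟨_, fun k => (hcl k).imp (heval _) (Or.imp (heval _) (heval _))⟩
end
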